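/- arXiv:2209.13376 — 2 statements merged into one kernel-verified Lean document; each statement's English description precedes it below -/
import Mathlib

section
/- Let μ > 0, let f ∈ C¹(ℝ), set Ω := {(x₁,x₂) ∈ ℝ² : x₂ < f(x₁)}, and let β = (β₁, β₂) ∈ C¹(ℝ, ℝ²) have compact support. Define, for x ∈ Ω, v(x) := ∑_{k=1}^{2} ∫_ℝ ∂_s(𝒰^k(x − (s, f(s)))) β_k(s) ds and p(x) := −∑_{k=1}^{2} ∫_ℝ 𝒫^k(x − (s, f(s))) β_k'(s) ds. Then v and p are well-defined and infinitely differentiable on Ω, and (v, p) solves the Stokes system in Ω: μ Δv − ∇p = 0 and div v = 0 on Ω. -/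
/-!
Below the graph of `f` the point `x − (s, f(s))` never vanishes, so all kernels are evaluated
where they are smooth. Integrating by parts in `s` (`vsl_eq_graphPotential`), both `v_j` and `p`
become sums over `k` of potentials `∫ K(x − (s, f(s))) g_k(s) ds` with the same continuous,
compactly supported densities `g_k = −β_k'`, the kernels being `𝒰^k_j` and `𝒫^k` respectively.

For a kernel smooth off the origin such a potential may be differentiated under the integral
sign (`hasFDerivAt_graphPotential`), and its partial derivatives are potentials of the same
kind; hence it is `C^∞` (`contDiffOn_graphPotential`), and every linear differential relation
between the kernels passes to the potentials (`graphPotential_relation`). The Stokes system thus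
reduces to the pointwise identities `μ Δ𝒰^k = ∇𝒫^k` and `div 𝒰^k = 0` off the origin
(`momentum_Uc_fst`, `momentum_Uc_snd`, `div_Uc`), which are explicit computations with rational
functions.
-/


noncomputable section

open Real MeasureTheory

/-- Partial derivative in the first coordinate direction. -/
def pd1 (g : ℝ × ℝ → ℝ) (x : ℝ × ℝ) : ℝ := fderiv ℝ g x (1, 0)

/-- Partial derivative in the second coordinate direction. -/
def pd2 (g : ℝ × ℝ → ℝ) (x : ℝ × ℝ) : ℝ := fderiv ℝ g x (0, 1)

/-- The `j`-th coordinate of a point of `ℝ²`. -/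
def coord (j : Fin 2) (y : ℝ × ℝ) : ℝ := if j = 0 then y.1 else y.2

/-- The `j`-th component of the fundamental velocity 𝒰^k of the 2D Stokes equations
with viscosity μ:  𝒰^k_j(y) = −(1/(4πμ))(δ_{jk} ln(1/|y|) + y_j y_k/|y|²). -/
def Uc (μ : ℝ) (k j : Fin 2) (y : ℝ × ℝ) : ℝ :=
  -(1 / (4 * π * μ)) *
    ((if j = k then (1 : ℝ) else 0) * Real.log (1 / Real.sqrt (y.1 ^ 2 + y.2 ^ 2))
      + coord j y * coord k y / (y.1 ^ 2 + y.2 ^ 2))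

/-- The fundamental pressure 𝒫^k(y) = −(1/(2π)) y_k/|y|². -/
def Pk (k : Fin 2) (y : ℝ × ℝ) : ℝ :=
  -(1 / (2 * π)) * coord k y / (y.1 ^ 2 + y.2 ^ 2)

/-- The kernel `∂_s(𝒰^k_j(x − (s, f(s)))) = −(∂₁𝒰^k_j + f'(s) ∂₂𝒰^k_j)(x − (s, f(s)))`. -/
def vker (μ : ℝ) (f : ℝ → ℝ) (k j : Fin 2) (x : ℝ × ℝ) (s : ℝ) : ℝ :=
  -(pd1 (Uc μ k j) (x - (s, f s)) + deriv f s * pd2 (Uc μ k j) (x - (s, f s)))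

/-- The `j`-th component of `v(x) = ∑_k ∫ ∂_s(𝒰^k(x − (s, f(s)))) β_k(s) ds`. -/
def vsl (μ : ℝ) (f : ℝ → ℝ) (β : Fin 2 → ℝ → ℝ) (j : Fin 2) (x : ℝ × ℝ) : ℝ :=
  ∑ k : Fin 2, ∫ s, vker μ f k j x s * β k s

/-- The pressure `p(x) = −∑_k ∫ 𝒫^k(x − (s, f(s))) β_k'(s) ds`. -/
def psl (f : ℝ → ℝ) (β : Fin 2 → ℝ → ℝ) (x : ℝ × ℝ) : ℝ :=
  -∑ k : Fin 2, ∫ s, Pk k (x - (s, f s)) * deriv (β k) s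

/-! ### Potentials on a graph -/

/-- The potential `x ↦ ∫ K(x − (s, f(s))) g(s) ds` with kernel `K` and density `g` on the
graph of `f`. -/
def graphPotential (f : ℝ → ℝ) (K : ℝ × ℝ → ℝ) (g : ℝ → ℝ) (x : ℝ × ℝ) : ℝ :=
  ∫ s, K (x - (s, f s)) * g s

lemma sub_graph_ne_zero {f : ℝ → ℝ} {x : ℝ × ℝ} (hx : x.2 < f x.1) (s : ℝ) :
    x - (s, f s) ≠ 0 := by
  intro h
  obtain rfl : x = (s, f s) := sub_eq_zero.1 h
  exact lt_irrefl _ hx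

lemma isOpen_subgraph {f : ℝ → ℝ} (hf : Continuous f) : IsOpen {x : ℝ × ℝ | x.2 < f x.1} :=
  isOpen_lt continuous_snd (hf.comp continuous_fst)

lemma continuous_comp_sub_graph {E : Type*} [TopologicalSpace E] {f : ℝ → ℝ}
    (hf : Continuous f) {K : ℝ × ℝ → E} (hK : ContinuousOn K {0}ᶜ) {x : ℝ × ℝ}
    (hx : x.2 < f x.1) : Continuous fun s => K (x - (s, f s)) :=
  hK.comp_continuous (by fun_prop) fun s => sub_graph_ne_zero hx s

lemma integrable_kernel_mul {f : ℝ → ℝ} (hf : Continuous f) {K : ℝ × ℝ → ℝ}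
    (hK : ContinuousOn K {0}ᶜ) {g : ℝ → ℝ} (hg : Continuous g) (hgs : HasCompactSupport g)
    {x : ℝ × ℝ} (hx : x.2 < f x.1) : Integrable fun s => K (x - (s, f s)) * g s :=
  ((continuous_comp_sub_graph hf hK hx).mul hg).integrable_of_hasCompactSupport hgs.mul_left

lemma contDiffOn_fderiv_apply {K : ℝ × ℝ → ℝ} (hK : ContDiffOn ℝ (⊤ : ℕ∞) K {0}ᶜ)
    (e : ℝ × ℝ) : ContDiffOn ℝ (⊤ : ℕ∞) (fun y => fderiv ℝ K y e) {0}ᶜ :=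
  (((contDiffOn_infty_iff_fderiv_of_isOpen isOpen_compl_singleton).1 hK).2).clm_apply
    contDiffOn_const

/-- Differentiation under the integral sign. The domination comes from compactness: the
derivative of the kernel is bounded for `x` in a small closed ball below the graph and `s` in
the support of `g`. -/
lemma hasFDerivAt_graphPotential {f : ℝ → ℝ} (hf : Continuous f) {K : ℝ × ℝ → ℝ}
    (hK : ContDiffOn ℝ (⊤ : ℕ∞) K {0}ᶜ) {g : ℝ → ℝ} (hg : Continuous g)
    (hgs : HasCompactSupport g) {x : ℝ × ℝ} (hx : x.2 < f x.1) :
    Integrable (fun s => g s • fderiv ℝ K (x - (s, f s))) ∧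
    HasFDerivAt (graphPotential f K g) (∫ s, g s • fderiv ℝ K (x - (s, f s))) x := by
  have hK' : ContinuousOn (fderiv ℝ K) {0}ᶜ :=
    ((contDiffOn_infty_iff_fderiv_of_isOpen isOpen_compl_singleton).1 hK).2.continuousOn
  have hcont : Continuous fun s => g s • fderiv ℝ K (x - (s, f s)) :=
    hg.smul (continuous_comp_sub_graph hf hK' hx)
  refine ⟨hcont.integrable_of_hasCompactSupport hgs.smul_right, ?_⟩
  obtain ⟨ε, hε, hball⟩ := Metric.nhds_basis_closedBall.mem_iff.1
    ((isOpen_subgraph hf).mem_nhds hx)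
  have hcpt : IsCompact (Metric.closedBall x ε ×ˢ tsupport g) :=
    (isCompact_closedBall x ε).prod hgs
  obtain ⟨M, hM⟩ := hcpt.exists_bound_of_continuousOn
    (f := fun q : (ℝ × ℝ) × ℝ => fderiv ℝ K (q.1 - (q.2, f q.2))) (by
      refine hK'.comp (Continuous.continuousOn (by fun_prop)) ?_
      rintro ⟨z, s⟩ ⟨hz, -⟩
      exact sub_graph_ne_zero (hball hz) s)
  refine hasFDerivAt_integral_of_dominated_of_fderiv_le
    (F' := fun z s => g s • fderiv ℝ K (z - (s, f s))) (bound := fun s => ‖g s‖ * M)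
    (Metric.closedBall_mem_nhds x hε) ?_ ?_ hcont.aestronglyMeasurable ?_ ?_ ?_
  · filter_upwards [(isOpen_subgraph hf).mem_nhds hx] with z hz
    exact (integrable_kernel_mul hf hK.continuousOn hg hgs hz).aestronglyMeasurable
  · exact integrable_kernel_mul hf hK.continuousOn hg hgs hx
  · refine Filter.Eventually.of_forall fun s z hz => ?_
    rw [norm_smul]
    by_cases hs : s ∈ tsupport g
    · exact mul_le_mul_of_nonneg_left (hM (z, s) ⟨hz, hs⟩) (norm_nonneg _)
    · simp [image_eq_zero_of_notMem_tsupport hs]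
  · exact (hg.integrable_of_hasCompactSupport hgs).norm.mul_const M
  · refine Filter.Eventually.of_forall fun s z hz => ?_
    have hd : HasFDerivAt K (fderiv ℝ K (z - (s, f s))) (z - (s, f s)) :=
      ((hK.contDiffAt (isOpen_compl_singleton.mem_nhds
        (sub_graph_ne_zero (hball hz) s))).differentiableAt (by simp)).hasFDerivAt
    have := hd.comp z ((hasFDerivAt_id z).sub_const (s, f s))
    exact this.mul_const (g s)

lemma fderiv_graphPotential_apply {f : ℝ → ℝ} (hf : Continuous f) {K : ℝ × ℝ → ℝ}
    (hK : ContDiffOn ℝ (⊤ : ℕ∞) K {0}ᶜ) {g : ℝ → ℝ} (hg : Continuous g)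
    (hgs : HasCompactSupport g) {x : ℝ × ℝ} (hx : x.2 < f x.1) (e : ℝ × ℝ) :
    fderiv ℝ (graphPotential f K g) x e = graphPotential f (fun y => fderiv ℝ K y e) g x := by
  obtain ⟨hint, hd⟩ := hasFDerivAt_graphPotential hf hK hg hgs hx
  rw [hd.fderiv, ContinuousLinearMap.integral_apply hint]
  simp [graphPotential, mul_comm]

/-- Smoothness below the graph: each partial derivative of a potential is again a potential
whose kernel is smooth away from the origin, so induction on the order applies. -/
lemma contDiffOn_graphPotential {f : ℝ → ℝ} (hf : Continuous f) {K : ℝ × ℝ → ℝ}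
    (hK : ContDiffOn ℝ (⊤ : ℕ∞) K {0}ᶜ) {g : ℝ → ℝ} (hg : Continuous g)
    (hgs : HasCompactSupport g) :
    ContDiffOn ℝ (⊤ : ℕ∞) (graphPotential f K g) {x : ℝ × ℝ | x.2 < f x.1} := by
  refine contDiffOn_infty.2 fun n => ?_
  induction n generalizing K with
  | zero =>
    exact contDiffOn_zero.2 fun x hx =>
      (hasFDerivAt_graphPotential hf hK hg hgs hx).2.continuousAt.continuousWithinAt
  | succ n ih =>
    push_cast
    rw [contDiffOn_succ_iff_fderiv_of_isOpen (isOpen_subgraph hf)]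
    refine ⟨fun x hx =>
      (hasFDerivAt_graphPotential hf hK hg hgs hx).2.differentiableAt.differentiableWithinAt,
      by simp, ?_⟩
    rw [contDiffOn_clm_apply]
    exact fun e => (ih (contDiffOn_fderiv_apply hK e)).congr fun x hx =>
      fderiv_graphPotential_apply hf hK hg hgs hx e

/-- Differentiation of a function that agrees below the graph with a sum of two potentials. -/
lemma fderiv_apply_of_eq_graphPotential_add {f : ℝ → ℝ} (hf : Continuous f)
    {K : Fin 2 → ℝ × ℝ → ℝ} (hK : ∀ k, ContDiffOn ℝ (⊤ : ℕ∞) (K k) {0}ᶜ)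
    {g : Fin 2 → ℝ → ℝ} (hg : ∀ k, Continuous (g k)) (hgs : ∀ k, HasCompactSupport (g k))
    {F : ℝ × ℝ → ℝ} (hF : ∀ x : ℝ × ℝ, x.2 < f x.1 → F x = ∑ k, graphPotential f (K k) (g k) x)
    (e x : ℝ × ℝ) (hx : x.2 < f x.1) :
    fderiv ℝ F x e = ∑ k, graphPotential f (fun y => fderiv ℝ (K k) y e) (g k) x := by
  have hev : F =ᶠ[nhds x] fun z => ∑ k, graphPotential f (K k) (g k) z := by
    filter_upwards [(isOpen_subgraph hf).mem_nhds hx] with z hz using hF z hz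
  rw [hev.fderiv_eq, fderiv_fun_sum fun k _ =>
    (hasFDerivAt_graphPotential hf (hK k) (hg k) (hgs k) hx).2.differentiableAt]
  simp [fderiv_graphPotential_apply hf (hK _) (hg _) (hgs _) hx]

/-- A pointwise linear relation between kernels away from the origin passes to the potentials. -/
lemma graphPotential_relation {f : ℝ → ℝ} (hf : Continuous f) {g : ℝ → ℝ} (hg : Continuous g)
    (hgs : HasCompactSupport g) {A B C : ℝ × ℝ → ℝ} (hA : ContinuousOn A {0}ᶜ)
    (hB : ContinuousOn B {0}ᶜ) {c : ℝ}
    (h : ∀ y : ℝ × ℝ, y ≠ 0 → c * (A y + B y) = C y) {x : ℝ × ℝ} (hx : x.2 < f x.1) :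
    c * (graphPotential f A g x + graphPotential f B g x) = graphPotential f C g x := by
  unfold graphPotential
  rw [← integral_add (integrable_kernel_mul hf hA hg hgs hx)
    (integrable_kernel_mul hf hB hg hgs hx), ← integral_const_mul]
  refine integral_congr_ae (Filter.Eventually.of_forall fun s => ?_)
  simp only [← h _ (sub_graph_ne_zero hx s)]
  ring

/-! ### Smoothness of the fundamental solutions and slice derivatives -/

lemma normSq_pos {y : ℝ × ℝ} (hy : y ≠ 0) : 0 < y.1 ^ 2 + y.2 ^ 2 := by
  rcases eq_or_ne y.1 0 with h1 | h1
  · have h2 : y.2 ≠ 0 := fun h2 => hy (Prod.ext h1 h2)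
    positivity
  · positivity

lemma contDiff_coord (j : Fin 2) : ContDiff ℝ (⊤ : ℕ∞) (coord j) := by
  unfold coord
  fin_cases j
  · exact contDiff_fst
  · exact contDiff_snd

lemma contDiffOn_Uc (μ : ℝ) (k j : Fin 2) : ContDiffOn ℝ (⊤ : ℕ∞) (Uc μ k j) {0}ᶜ := by
  intro y hy
  have hρ := normSq_pos hy
  have hs : ContDiffAt ℝ (⊤ : ℕ∞) (fun y : ℝ × ℝ => y.1 ^ 2 + y.2 ^ 2) y := by fun_prop
  have hl : ContDiffAt ℝ (⊤ : ℕ∞)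
      (fun y : ℝ × ℝ => Real.log (1 / Real.sqrt (y.1 ^ 2 + y.2 ^ 2))) y :=
    (contDiffAt_const.div (hs.sqrt hρ.ne') (Real.sqrt_pos.2 hρ).ne').log
      (one_div_pos.2 (Real.sqrt_pos.2 hρ)).ne'
  exact (contDiffAt_const.mul ((contDiffAt_const.mul hl).add
    (((contDiff_coord j).contDiffAt.mul (contDiff_coord k).contDiffAt).div hs
      hρ.ne'))).contDiffWithinAt

lemma contDiffOn_Pk (k : Fin 2) : ContDiffOn ℝ (⊤ : ℕ∞) (Pk k) {0}ᶜ := by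
  intro y hy
  have hs : ContDiffAt ℝ (⊤ : ℕ∞) (fun y : ℝ × ℝ => y.1 ^ 2 + y.2 ^ 2) y := by fun_prop
  exact ((contDiffAt_const.mul (contDiff_coord k).contDiffAt).div hs
    (normSq_pos hy).ne').contDiffWithinAt

/-- `pd1` of a function smooth off the origin is the derivative along the horizontal slice of
any function with the same values off the origin. -/
lemma pd1_eq_of_slice {K G : ℝ × ℝ → ℝ} (hK : ContDiffOn ℝ (⊤ : ℕ∞) K {0}ᶜ)
    (hG : ∀ y, y ≠ 0 → K y = G y) {y : ℝ × ℝ} (hy : y ≠ 0) {d : ℝ}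
    (hd : HasDerivAt (fun t => G (t, y.2)) d y.1) : pd1 K y = d := by
  have hKd : DifferentiableAt ℝ K y :=
    (hK.contDiffAt (isOpen_compl_singleton.mem_nhds hy)).differentiableAt (by simp)
  have hev : K =ᶠ[nhds y] G := by
    filter_upwards [isOpen_compl_singleton.mem_nhds hy] with z hz using hG z hz
  have hGd : HasFDerivAt G (fderiv ℝ K y) (y.1, y.2) :=
    hKd.hasFDerivAt.congr_of_eventuallyEq hev.symm
  exact (hGd.comp_hasDerivAt y.1
    ((hasDerivAt_id y.1).prodMk (hasDerivAt_const y.1 y.2))).unique hd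

/-- The vertical analogue of `pd1_eq_of_slice`. -/
lemma pd2_eq_of_slice {K G : ℝ × ℝ → ℝ} (hK : ContDiffOn ℝ (⊤ : ℕ∞) K {0}ᶜ)
    (hG : ∀ y, y ≠ 0 → K y = G y) {y : ℝ × ℝ} (hy : y ≠ 0) {d : ℝ}
    (hd : HasDerivAt (fun t => G (y.1, t)) d y.2) : pd2 K y = d := by
  have hKd : DifferentiableAt ℝ K y :=
    (hK.contDiffAt (isOpen_compl_singleton.mem_nhds hy)).differentiableAt (by simp)
  have hev : K =ᶠ[nhds y] G := by
    filter_upwards [isOpen_compl_singleton.mem_nhds hy] with z hz using hG z hz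
  have hGd : HasFDerivAt G (fderiv ℝ K y) (y.1, y.2) :=
    hKd.hasFDerivAt.congr_of_eventuallyEq hev.symm
  exact (hGd.comp_hasDerivAt y.2
    ((hasDerivAt_const y.2 y.1).prodMk (hasDerivAt_id y.2))).unique hd

lemma hasDerivAt_log_add_quadratic_div {r : ℝ → ℝ} {t : ℝ} (hr : HasDerivAt r (2 * t) t)
    (h0 : r t ≠ 0) (c a p0 p1 p2 : ℝ) :
    HasDerivAt (fun t => c * (a * Real.log (r t) + (p0 + p1 * t + p2 * t ^ 2) / r t))
      (c * (((2 * a * t + p1 + 2 * p2 * t) * r t - 2 * t * (p0 + p1 * t + p2 * t ^ 2))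
        / r t ^ 2)) t := by
  have hN : HasDerivAt (fun t : ℝ => p0 + p1 * t + p2 * t ^ 2) (p1 + 2 * p2 * t) t := by
    have := (((hasDerivAt_id t).const_mul p1).const_add p0).add
      (((hasDerivAt_id t).pow 2).const_mul p2)
    refine this.congr_deriv ?_
    simp; ring
  refine ((((hr.log h0).const_mul a).add (hN.div hr h0)).const_mul c).congr_deriv ?_
  field_simp
  ring

lemma hasDerivAt_cubic_div_sq {r : ℝ → ℝ} {t : ℝ} (hr : HasDerivAt r (2 * t) t)
    (h0 : r t ≠ 0) (c p0 p1 p2 p3 : ℝ) :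
    HasDerivAt (fun t => c * ((p0 + p1 * t + p2 * t ^ 2 + p3 * t ^ 3) / r t ^ 2))
      (c * (((p1 + 2 * p2 * t + 3 * p3 * t ^ 2) * r t
        - 4 * t * (p0 + p1 * t + p2 * t ^ 2 + p3 * t ^ 3)) / r t ^ 3)) t := by
  have hN : HasDerivAt (fun t : ℝ => p0 + p1 * t + p2 * t ^ 2 + p3 * t ^ 3)
      (p1 + 2 * p2 * t + 3 * p3 * t ^ 2) t := by
    have := ((((hasDerivAt_id t).const_mul p1).const_add p0).add
      (((hasDerivAt_id t).pow 2).const_mul p2)).add (((hasDerivAt_id t).pow 3).const_mul p3)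
    refine this.congr_deriv ?_
    simp; ring
  refine ((hN.div (hr.pow 2) (pow_ne_zero 2 h0)).const_mul c).congr_deriv ?_
  simp only [Pi.pow_apply]
  field_simp
  ring

lemma hasDerivAt_sq_add (b t : ℝ) : HasDerivAt (fun t : ℝ => t ^ 2 + b ^ 2) (2 * t) t := by
  simpa using (hasDerivAt_pow 2 t).add_const (b ^ 2)

lemma hasDerivAt_add_sq (b t : ℝ) : HasDerivAt (fun t : ℝ => b ^ 2 + t ^ 2) (2 * t) t := by
  simpa using (hasDerivAt_pow 2 t).const_add (b ^ 2)

/-- If off the origin `K = c (a log|y|² + q/|y|²)` with `q` a quadratic polynomial in `y₁` on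
each horizontal line, this computes `∂₁K`. -/
lemma pd1_log_add_quadratic_div {K : ℝ × ℝ → ℝ} (hK : ContDiffOn ℝ (⊤ : ℕ∞) K {0}ᶜ) (c a : ℝ)
    (p0 p1 p2 : ℝ → ℝ)
    (hG : ∀ y : ℝ × ℝ, y ≠ 0 → K y = c * (a * Real.log (y.1 ^ 2 + y.2 ^ 2)
      + (p0 y.2 + p1 y.2 * y.1 + p2 y.2 * y.1 ^ 2) / (y.1 ^ 2 + y.2 ^ 2)))
    {y : ℝ × ℝ} (hy : y ≠ 0) :
    pd1 K y = c * (((2 * a * y.1 + p1 y.2 + 2 * p2 y.2 * y.1) * (y.1 ^ 2 + y.2 ^ 2)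
      - 2 * y.1 * (p0 y.2 + p1 y.2 * y.1 + p2 y.2 * y.1 ^ 2)) / (y.1 ^ 2 + y.2 ^ 2) ^ 2) :=
  pd1_eq_of_slice hK hG hy
    (hasDerivAt_log_add_quadratic_div (hasDerivAt_sq_add y.2 y.1) (normSq_pos hy).ne'
      c a (p0 y.2) (p1 y.2) (p2 y.2))

/-- The vertical analogue of `pd1_log_add_quadratic_div`. -/
lemma pd2_log_add_quadratic_div {K : ℝ × ℝ → ℝ} (hK : ContDiffOn ℝ (⊤ : ℕ∞) K {0}ᶜ) (c a : ℝ)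
    (p0 p1 p2 : ℝ → ℝ)
    (hG : ∀ y : ℝ × ℝ, y ≠ 0 → K y = c * (a * Real.log (y.1 ^ 2 + y.2 ^ 2)
      + (p0 y.1 + p1 y.1 * y.2 + p2 y.1 * y.2 ^ 2) / (y.1 ^ 2 + y.2 ^ 2)))
    {y : ℝ × ℝ} (hy : y ≠ 0) :
    pd2 K y = c * (((2 * a * y.2 + p1 y.1 + 2 * p2 y.1 * y.2) * (y.1 ^ 2 + y.2 ^ 2)
      - 2 * y.2 * (p0 y.1 + p1 y.1 * y.2 + p2 y.1 * y.2 ^ 2)) / (y.1 ^ 2 + y.2 ^ 2) ^ 2) :=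
  pd2_eq_of_slice hK hG hy
    (hasDerivAt_log_add_quadratic_div (hasDerivAt_add_sq y.1 y.2) (normSq_pos hy).ne'
      c a (p0 y.1) (p1 y.1) (p2 y.1))

/-- If off the origin `K = c q/|y|⁴` with `q` a cubic polynomial in `y₁` on each horizontal
line, this computes `∂₁K`. -/
lemma pd1_cubic_div_sq {K : ℝ × ℝ → ℝ} (hK : ContDiffOn ℝ (⊤ : ℕ∞) K {0}ᶜ) (c : ℝ)
    (p0 p1 p2 p3 : ℝ → ℝ)
    (hG : ∀ y : ℝ × ℝ, y ≠ 0 → K y = c * ((p0 y.2 + p1 y.2 * y.1 + p2 y.2 * y.1 ^ 2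
      + p3 y.2 * y.1 ^ 3) / (y.1 ^ 2 + y.2 ^ 2) ^ 2))
    {y : ℝ × ℝ} (hy : y ≠ 0) :
    pd1 K y = c * (((p1 y.2 + 2 * p2 y.2 * y.1 + 3 * p3 y.2 * y.1 ^ 2) * (y.1 ^ 2 + y.2 ^ 2)
      - 4 * y.1 * (p0 y.2 + p1 y.2 * y.1 + p2 y.2 * y.1 ^ 2 + p3 y.2 * y.1 ^ 3))
        / (y.1 ^ 2 + y.2 ^ 2) ^ 3) :=
  pd1_eq_of_slice hK hG hy
    (hasDerivAt_cubic_div_sq (hasDerivAt_sq_add y.2 y.1) (normSq_pos hy).ne'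
      c (p0 y.2) (p1 y.2) (p2 y.2) (p3 y.2))

/-- The vertical analogue of `pd1_cubic_div_sq`. -/
lemma pd2_cubic_div_sq {K : ℝ × ℝ → ℝ} (hK : ContDiffOn ℝ (⊤ : ℕ∞) K {0}ᶜ) (c : ℝ)
    (p0 p1 p2 p3 : ℝ → ℝ)
    (hG : ∀ y : ℝ × ℝ, y ≠ 0 → K y = c * ((p0 y.1 + p1 y.1 * y.2 + p2 y.1 * y.2 ^ 2
      + p3 y.1 * y.2 ^ 3) / (y.1 ^ 2 + y.2 ^ 2) ^ 2))
    {y : ℝ × ℝ} (hy : y ≠ 0) :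
    pd2 K y = c * (((p1 y.1 + 2 * p2 y.1 * y.2 + 3 * p3 y.1 * y.2 ^ 2) * (y.1 ^ 2 + y.2 ^ 2)
      - 4 * y.2 * (p0 y.1 + p1 y.1 * y.2 + p2 y.1 * y.2 ^ 2 + p3 y.1 * y.2 ^ 3))
        / (y.1 ^ 2 + y.2 ^ 2) ^ 3) :=
  pd2_eq_of_slice hK hG hy
    (hasDerivAt_cubic_div_sq (hasDerivAt_add_sq y.1 y.2) (normSq_pos hy).ne'
      c (p0 y.1) (p1 y.1) (p2 y.1) (p3 y.1))

/-! ### Pointwise Stokes equations for the fundamental solutions -/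

lemma log_one_div_sqrt (r : ℝ) (hr : 0 < r) :
    Real.log (1 / Real.sqrt r) = -(1 / 2) * Real.log r := by
  rw [one_div, Real.log_inv, Real.log_sqrt hr.le]
  ring

lemma Uc_comm (μ : ℝ) (k j : Fin 2) : Uc μ k j = Uc μ j k := by
  funext y
  simp only [Uc, eq_comm (a := j) (b := k), mul_comm (coord j y)]

section Derivatives

variable (μ : ℝ) {y : ℝ × ℝ}

lemma pd1_Uc_zero_zero (hy : y ≠ 0) : pd1 (Uc μ 0 0) y =
    -(1 / (4 * π * μ)) * ((y.1 * y.2 ^ 2 - y.1 ^ 3) / (y.1 ^ 2 + y.2 ^ 2) ^ 2) := by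
  rw [pd1_log_add_quadratic_div (contDiffOn_Uc μ 0 0) (-(1 / (4 * π * μ))) (-(1 / 2))
    (fun _ => 0) (fun _ => 0) (fun _ => 1) (fun y hy => ?_) hy]
  · ring
  · simp only [Uc, coord, log_one_div_sqrt _ (normSq_pos hy), if_true]
    ring

lemma pd2_Uc_zero_zero (hy : y ≠ 0) : pd2 (Uc μ 0 0) y =
    -(1 / (4 * π * μ)) * ((-3 * y.1 ^ 2 * y.2 - y.2 ^ 3) / (y.1 ^ 2 + y.2 ^ 2) ^ 2) := by
  rw [pd2_log_add_quadratic_div (contDiffOn_Uc μ 0 0) (-(1 / (4 * π * μ))) (-(1 / 2))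
    (fun b => b ^ 2) (fun _ => 0) (fun _ => 0) (fun y hy => ?_) hy]
  · ring
  · simp only [Uc, coord, log_one_div_sqrt _ (normSq_pos hy), if_true]
    ring

lemma pd1_Uc_zero_one (hy : y ≠ 0) : pd1 (Uc μ 0 1) y =
    -(1 / (4 * π * μ)) * ((y.2 ^ 3 - y.1 ^ 2 * y.2) / (y.1 ^ 2 + y.2 ^ 2) ^ 2) := by
  rw [pd1_log_add_quadratic_div (contDiffOn_Uc μ 0 1) (-(1 / (4 * π * μ))) 0
    (fun _ => 0) (fun b => b) (fun _ => 0) (fun y hy => ?_) hy]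
  · ring
  · simp only [Uc, coord, one_ne_zero, if_true, if_false]
    ring

lemma pd2_Uc_zero_one (hy : y ≠ 0) : pd2 (Uc μ 0 1) y =
    -(1 / (4 * π * μ)) * ((y.1 ^ 3 - y.1 * y.2 ^ 2) / (y.1 ^ 2 + y.2 ^ 2) ^ 2) := by
  rw [pd2_log_add_quadratic_div (contDiffOn_Uc μ 0 1) (-(1 / (4 * π * μ))) 0
    (fun _ => 0) (fun b => b) (fun _ => 0) (fun y hy => ?_) hy]
  · ring
  · simp only [Uc, coord, one_ne_zero, if_true, if_false]
    ring

lemma pd1_Uc_one_one (hy : y ≠ 0) : pd1 (Uc μ 1 1) y =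
    -(1 / (4 * π * μ)) * ((-3 * y.1 * y.2 ^ 2 - y.1 ^ 3) / (y.1 ^ 2 + y.2 ^ 2) ^ 2) := by
  rw [pd1_log_add_quadratic_div (contDiffOn_Uc μ 1 1) (-(1 / (4 * π * μ))) (-(1 / 2))
    (fun b => b ^ 2) (fun _ => 0) (fun _ => 0) (fun y hy => ?_) hy]
  · ring
  · simp only [Uc, coord, log_one_div_sqrt _ (normSq_pos hy), if_true, one_ne_zero, if_false]
    ring

lemma pd2_Uc_one_one (hy : y ≠ 0) : pd2 (Uc μ 1 1) y =
    -(1 / (4 * π * μ)) * ((y.1 ^ 2 * y.2 - y.2 ^ 3) / (y.1 ^ 2 + y.2 ^ 2) ^ 2) := by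
  rw [pd2_log_add_quadratic_div (contDiffOn_Uc μ 1 1) (-(1 / (4 * π * μ))) (-(1 / 2))
    (fun _ => 0) (fun _ => 0) (fun _ => 1) (fun y hy => ?_) hy]
  · ring
  · simp only [Uc, coord, log_one_div_sqrt _ (normSq_pos hy), if_true, one_ne_zero, if_false]
    ring

lemma pd1_Pk_zero (hy : y ≠ 0) : pd1 (Pk 0) y =
    -(1 / (2 * π)) * ((y.2 ^ 2 - y.1 ^ 2) / (y.1 ^ 2 + y.2 ^ 2) ^ 2) := by
  rw [pd1_log_add_quadratic_div (contDiffOn_Pk 0) (-(1 / (2 * π))) 0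
    (fun _ => 0) (fun _ => 1) (fun _ => 0) (fun y hy => ?_) hy]
  · ring
  · simp [Pk, coord]
    ring

lemma pd2_Pk_zero (hy : y ≠ 0) : pd2 (Pk 0) y =
    -(1 / (2 * π)) * ((-2 * y.1 * y.2) / (y.1 ^ 2 + y.2 ^ 2) ^ 2) := by
  rw [pd2_log_add_quadratic_div (contDiffOn_Pk 0) (-(1 / (2 * π))) 0
    (fun b => b) (fun _ => 0) (fun _ => 0) (fun y hy => ?_) hy]
  · ring
  · simp [Pk, coord]
    ring

lemma pd1_Pk_one (hy : y ≠ 0) : pd1 (Pk 1) y =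
    -(1 / (2 * π)) * ((-2 * y.1 * y.2) / (y.1 ^ 2 + y.2 ^ 2) ^ 2) := by
  rw [pd1_log_add_quadratic_div (contDiffOn_Pk 1) (-(1 / (2 * π))) 0
    (fun b => b) (fun _ => 0) (fun _ => 0) (fun y hy => ?_) hy]
  · ring
  · simp [Pk, coord]
    ring

lemma pd2_Pk_one (hy : y ≠ 0) : pd2 (Pk 1) y =
    -(1 / (2 * π)) * ((y.1 ^ 2 - y.2 ^ 2) / (y.1 ^ 2 + y.2 ^ 2) ^ 2) := by
  rw [pd2_log_add_quadratic_div (contDiffOn_Pk 1) (-(1 / (2 * π))) 0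
    (fun _ => 0) (fun _ => 1) (fun _ => 0) (fun y hy => ?_) hy]
  · ring
  · simp [Pk, coord]
    ring

end Derivatives

lemma contDiffOn_pd1 {K : ℝ × ℝ → ℝ} (hK : ContDiffOn ℝ (⊤ : ℕ∞) K {0}ᶜ) :
    ContDiffOn ℝ (⊤ : ℕ∞) (pd1 K) {0}ᶜ := contDiffOn_fderiv_apply hK (1, 0)

lemma contDiffOn_pd2 {K : ℝ × ℝ → ℝ} (hK : ContDiffOn ℝ (⊤ : ℕ∞) K {0}ᶜ) :
    ContDiffOn ℝ (⊤ : ℕ∞) (pd2 K) {0}ᶜ := contDiffOn_fderiv_apply hK (0, 1)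

/-- The fundamental velocities are divergence free off the origin. -/
lemma div_Uc (μ : ℝ) (k : Fin 2) {y : ℝ × ℝ} (hy : y ≠ 0) :
    pd1 (Uc μ k 0) y + pd2 (Uc μ k 1) y = 0 := by
  fin_cases k
  · simp only [Fin.zero_eta]
    rw [pd1_Uc_zero_zero μ hy, pd2_Uc_zero_one μ hy]
    ring
  · simp only [Fin.mk_one]
    rw [Uc_comm μ 1 0, pd1_Uc_zero_one μ hy, pd2_Uc_one_one μ hy]
    ring

lemma laplace_Uc_zero_zero {μ : ℝ} (hμ : μ ≠ 0) {y : ℝ × ℝ} (hy : y ≠ 0) :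
    μ * (pd1 (pd1 (Uc μ 0 0)) y + pd2 (pd2 (Uc μ 0 0)) y) = pd1 (Pk 0) y := by
  have hρ := (normSq_pos hy).ne'
  rw [pd1_Pk_zero hy,
    pd1_cubic_div_sq (contDiffOn_pd1 (contDiffOn_Uc μ 0 0)) (-(1 / (4 * π * μ)))
      (fun _ => 0) (fun b => b ^ 2) (fun _ => 0) (fun _ => -1)
      (fun y hy => by rw [pd1_Uc_zero_zero μ hy]; ring) hy,
    pd2_cubic_div_sq (contDiffOn_pd2 (contDiffOn_Uc μ 0 0)) (-(1 / (4 * π * μ)))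
      (fun _ => 0) (fun b => -3 * b ^ 2) (fun _ => 0) (fun _ => -1)
      (fun y hy => by rw [pd2_Uc_zero_zero μ hy]; ring) hy]
  field_simp
  ring

lemma laplace_Uc_one_one {μ : ℝ} (hμ : μ ≠ 0) {y : ℝ × ℝ} (hy : y ≠ 0) :
    μ * (pd1 (pd1 (Uc μ 1 1)) y + pd2 (pd2 (Uc μ 1 1)) y) = pd2 (Pk 1) y := by
  have hρ := (normSq_pos hy).ne'
  rw [pd2_Pk_one hy,
    pd1_cubic_div_sq (contDiffOn_pd1 (contDiffOn_Uc μ 1 1)) (-(1 / (4 * π * μ)))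
      (fun _ => 0) (fun b => -3 * b ^ 2) (fun _ => 0) (fun _ => -1)
      (fun y hy => by rw [pd1_Uc_one_one μ hy]; ring) hy,
    pd2_cubic_div_sq (contDiffOn_pd2 (contDiffOn_Uc μ 1 1)) (-(1 / (4 * π * μ)))
      (fun _ => 0) (fun b => b ^ 2) (fun _ => 0) (fun _ => -1)
      (fun y hy => by rw [pd2_Uc_one_one μ hy]; ring) hy]
  field_simp
  ring

lemma laplace_Uc_zero_one {μ : ℝ} (hμ : μ ≠ 0) {y : ℝ × ℝ} (hy : y ≠ 0) :
    μ * (pd1 (pd1 (Uc μ 0 1)) y + pd2 (pd2 (Uc μ 0 1)) y) = pd2 (Pk 0) y := by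
  have hρ := (normSq_pos hy).ne'
  rw [pd2_Pk_zero hy,
    pd1_cubic_div_sq (contDiffOn_pd1 (contDiffOn_Uc μ 0 1)) (-(1 / (4 * π * μ)))
      (fun b => b ^ 3) (fun _ => 0) (fun b => -b) (fun _ => 0)
      (fun y hy => by rw [pd1_Uc_zero_one μ hy]; ring) hy,
    pd2_cubic_div_sq (contDiffOn_pd2 (contDiffOn_Uc μ 0 1)) (-(1 / (4 * π * μ)))
      (fun b => b ^ 3) (fun _ => 0) (fun b => -b) (fun _ => 0)
      (fun y hy => by rw [pd2_Uc_zero_one μ hy]; ring) hy]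
  field_simp
  ring

/-- First component of `μ Δ𝒰^k = ∇𝒫^k` off the origin. -/
lemma momentum_Uc_fst {μ : ℝ} (hμ : μ ≠ 0) (k : Fin 2) {y : ℝ × ℝ} (hy : y ≠ 0) :
    μ * (pd1 (pd1 (Uc μ k 0)) y + pd2 (pd2 (Uc μ k 0)) y) = pd1 (Pk k) y := by
  fin_cases k
  · exact laplace_Uc_zero_zero hμ hy
  · simp only [Fin.mk_one]
    rw [Uc_comm μ 1 0, laplace_Uc_zero_one hμ hy, pd2_Pk_zero hy, pd1_Pk_one hy]

/-- Second component of `μ Δ𝒰^k = ∇𝒫^k` off the origin. -/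
lemma momentum_Uc_snd {μ : ℝ} (hμ : μ ≠ 0) (k : Fin 2) {y : ℝ × ℝ} (hy : y ≠ 0) :
    μ * (pd1 (pd1 (Uc μ k 1)) y + pd2 (pd2 (Uc μ k 1)) y) = pd2 (Pk k) y := by
  fin_cases k
  · exact laplace_Uc_zero_one hμ hy
  · exact laplace_Uc_one_one hμ hy

/-! ### Velocity and pressure as potentials -/

lemma integrable_vker_mul (μ : ℝ) {f : ℝ → ℝ} (hf : ContDiff ℝ 1 f) (k j : Fin 2) {b : ℝ → ℝ}
    (hb : Continuous b) (hbs : HasCompactSupport b) {x : ℝ × ℝ} (hx : x.2 < f x.1) :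
    Integrable fun s => vker μ f k j x s * b s := by
  have h1 := continuous_comp_sub_graph hf.continuous
    (contDiffOn_pd1 (contDiffOn_Uc μ k j)).continuousOn hx
  have h2 := continuous_comp_sub_graph hf.continuous
    (contDiffOn_pd2 (contDiffOn_Uc μ k j)).continuousOn hx
  have h3 : Continuous (deriv f) := hf.continuous_deriv le_rfl
  exact Continuous.integrable_of_hasCompactSupport
    (((h1.add (h3.mul h2)).neg).mul hb) hbs.mul_left

lemma hasDerivAt_Uc_sub_graph (μ : ℝ) {f : ℝ → ℝ} (hf : ContDiff ℝ 1 f) (k j : Fin 2)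
    {x : ℝ × ℝ} (hx : x.2 < f x.1) (s : ℝ) :
    HasDerivAt (fun s => Uc μ k j (x - (s, f s))) (vker μ f k j x s) s := by
  have hd : HasFDerivAt (Uc μ k j) (fderiv ℝ (Uc μ k j) (x - (s, f s))) (x - (s, f s)) :=
    (((contDiffOn_Uc μ k j).contDiffAt (isOpen_compl_singleton.mem_nhds
      (sub_graph_ne_zero hx s))).differentiableAt (by simp)).hasFDerivAt
  have hfs : HasDerivAt f (deriv f s) s :=
    (hf.differentiable one_ne_zero s).hasDerivAt
  have hγ : HasDerivAt (fun s => x - (s, f s)) (-(1, deriv f s)) s :=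
    ((hasDerivAt_id s).prodMk hfs).const_sub x
  refine (hd.comp_hasDerivAt s hγ).congr_deriv ?_
  have he : ((1, deriv f s) : ℝ × ℝ) = (1, 0) + deriv f s • (0, 1) := by ext <;> simp
  rw [he, map_neg, map_add, map_smul]
  rfl

/-- Integration by parts in `s` turns the velocity into a sum of potentials with kernels
`𝒰^k_j` and densities `-β_k'`. -/
lemma vsl_eq_graphPotential (μ : ℝ) {f : ℝ → ℝ} (hf : ContDiff ℝ 1 f) {β : Fin 2 → ℝ → ℝ}
    (hβ : ∀ k, ContDiff ℝ 1 (β k)) (hβs : ∀ k, HasCompactSupport (β k)) (j : Fin 2)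
    (x : ℝ × ℝ) (hx : x.2 < f x.1) :
    vsl μ f β j x = ∑ k, graphPotential f (Uc μ k j) (fun s => -deriv (β k) s) x := by
  refine Finset.sum_congr rfl fun k _ => ?_
  have hU := (contDiffOn_Uc μ k j).continuousOn
  have h := integral_mul_deriv_eq_deriv_mul_of_integrable
    (u := fun s => Uc μ k j (x - (s, f s))) (v := β k) (u' := vker μ f k j x)
    (v' := deriv (β k))
    (fun s _ => hasDerivAt_Uc_sub_graph μ hf k j hx s)
    (fun s _ => ((hβ k).differentiable one_ne_zero s).hasDerivAt)
    (integrable_kernel_mul hf.continuous hU ((hβ k).continuous_deriv le_rfl) (hβs k).deriv hx)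
    (integrable_vker_mul μ hf k j (hβ k).continuous (hβs k) hx)
    (integrable_kernel_mul hf.continuous hU (hβ k).continuous (hβs k) hx)
  simp only [graphPotential, mul_neg, integral_neg, h, neg_neg]

lemma psl_eq_graphPotential (f : ℝ → ℝ) (β : Fin 2 → ℝ → ℝ) (x : ℝ × ℝ) :
    psl f β x = ∑ k, graphPotential f (Pk k) (fun s => -deriv (β k) s) x := by
  simp only [psl, graphPotential, mul_neg, integral_neg, Finset.sum_neg_distrib]

/-- Let `μ > 0`, `f ∈ C¹(ℝ)`, `Ω = {x : x₂ < f(x₁)}`, and let `β = (β₁,β₂) ∈ C¹(ℝ,ℝ²)`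
have compact support.  Then `v` and `p` defined by the single layer potential formulas
are well defined (the integrals converge absolutely) and infinitely differentiable on
`Ω`, and `(v,p)` solves the Stokes system in `Ω`: `μ Δv − ∇p = 0` and `div v = 0`. -/
theorem single_layer_velocity_pressure_solves_stokes
    (μ : ℝ) (hμ : 0 < μ)
    (f : ℝ → ℝ) (hf : ContDiff ℝ 1 f)
    (β : Fin 2 → ℝ → ℝ) (hβ : ∀ k, ContDiff ℝ 1 (β k))
    (hβs : ∀ k, HasCompactSupport (β k)) :
    (∀ x : ℝ × ℝ, x.2 < f x.1 → ∀ k j : Fin 2,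
        Integrable (fun s => vker μ f k j x s * β k s) ∧
        Integrable (fun s => Pk k (x - (s, f s)) * deriv (β k) s)) ∧
    (∀ j : Fin 2, ContDiffOn ℝ (⊤ : ℕ∞) (vsl μ f β j) {x : ℝ × ℝ | x.2 < f x.1}) ∧
    ContDiffOn ℝ (⊤ : ℕ∞) (psl f β) {x : ℝ × ℝ | x.2 < f x.1} ∧
    (∀ x : ℝ × ℝ, x.2 < f x.1 →
        (μ * (pd1 (pd1 (vsl μ f β 0)) x + pd2 (pd2 (vsl μ f β 0)) x)
            - pd1 (psl f β) x = 0) ∧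
        (μ * (pd1 (pd1 (vsl μ f β 1)) x + pd2 (pd2 (vsl μ f β 1)) x)
            - pd2 (psl f β) x = 0) ∧
        pd1 (vsl μ f β 0) x + pd2 (vsl μ f β 1) x = 0) := by
  have hfc := hf.continuous
  have hg : ∀ k, Continuous fun s => -deriv (β k) s :=
    fun k => ((hβ k).continuous_deriv le_rfl).neg
  have hgs : ∀ k, HasCompactSupport fun s => -deriv (β k) s := fun k => (hβs k).deriv.neg
  have hv := fun j => vsl_eq_graphPotential μ hf hβ hβs j
  have hp := fun (x : ℝ × ℝ) (_ : x.2 < f x.1) => psl_eq_graphPotential f β x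
  have hU := contDiffOn_Uc μ
  have hv1 : ∀ j (x : ℝ × ℝ), x.2 < f x.1 → pd1 (vsl μ f β j) x
      = ∑ k, graphPotential f (pd1 (Uc μ k j)) (fun s => -deriv (β k) s) x :=
    fun j => fderiv_apply_of_eq_graphPotential_add hfc (fun k => hU k j) hg hgs (hv j) (1, 0)
  have hv2 : ∀ j (x : ℝ × ℝ), x.2 < f x.1 → pd2 (vsl μ f β j) x
      = ∑ k, graphPotential f (pd2 (Uc μ k j)) (fun s => -deriv (β k) s) x :=
    fun j => fderiv_apply_of_eq_graphPotential_add hfc (fun k => hU k j) hg hgs (hv j) (0, 1)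
  have hv11 : ∀ j (x : ℝ × ℝ), x.2 < f x.1 → pd1 (pd1 (vsl μ f β j)) x
      = ∑ k, graphPotential f (pd1 (pd1 (Uc μ k j))) (fun s => -deriv (β k) s) x :=
    fun j => fderiv_apply_of_eq_graphPotential_add hfc (fun k => contDiffOn_pd1 (hU k j))
      hg hgs (hv1 j) (1, 0)
  have hv22 : ∀ j (x : ℝ × ℝ), x.2 < f x.1 → pd2 (pd2 (vsl μ f β j)) x
      = ∑ k, graphPotential f (pd2 (pd2 (Uc μ k j))) (fun s => -deriv (β k) s) x :=
    fun j => fderiv_apply_of_eq_graphPotential_add hfc (fun k => contDiffOn_pd2 (hU k j))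
      hg hgs (hv2 j) (0, 1)
  have hp1 : ∀ x : ℝ × ℝ, x.2 < f x.1 → pd1 (psl f β) x
      = ∑ k, graphPotential f (pd1 (Pk k)) (fun s => -deriv (β k) s) x :=
    fderiv_apply_of_eq_graphPotential_add hfc contDiffOn_Pk hg hgs hp (1, 0)
  have hp2 : ∀ x : ℝ × ℝ, x.2 < f x.1 → pd2 (psl f β) x
      = ∑ k, graphPotential f (pd2 (Pk k)) (fun s => -deriv (β k) s) x :=
    fderiv_apply_of_eq_graphPotential_add hfc contDiffOn_Pk hg hgs hp (0, 1)
  have hc11 : ∀ k j, ContinuousOn (pd1 (pd1 (Uc μ k j))) {0}ᶜ :=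
    fun k j => (contDiffOn_pd1 (contDiffOn_pd1 (hU k j))).continuousOn
  have hc22 : ∀ k j, ContinuousOn (pd2 (pd2 (Uc μ k j))) {0}ᶜ :=
    fun k j => (contDiffOn_pd2 (contDiffOn_pd2 (hU k j))).continuousOn
  refine ⟨fun x hx k j => ⟨?_, ?_⟩, fun j => ?_, ?_, fun x hx => ⟨?_, ?_, ?_⟩⟩
  · exact integrable_vker_mul μ hf k j (hβ k).continuous (hβs k) hx
  · exact integrable_kernel_mul hfc (contDiffOn_Pk k).continuousOn
      ((hβ k).continuous_deriv le_rfl) (hβs k).deriv hx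
  · exact (ContDiffOn.sum fun k _ =>
      contDiffOn_graphPotential hfc (hU k j) (hg k) (hgs k)).congr (hv j)
  · exact (ContDiffOn.sum fun k _ =>
      contDiffOn_graphPotential hfc (contDiffOn_Pk k) (hg k) (hgs k)).congr hp
  · rw [hv11 0 x hx, hv22 0 x hx, hp1 x hx, ← Finset.sum_add_distrib, Finset.mul_sum, sub_eq_zero]
    exact Finset.sum_congr rfl fun k _ => graphPotential_relation hfc (hg k) (hgs k)
      (hc11 k 0) (hc22 k 0) (fun y hy => momentum_Uc_fst hμ.ne' k hy) hx
  · rw [hv11 1 x hx, hv22 1 x hx, hp2 x hx, ← Finset.sum_add_distrib, Finset.mul_sum, sub_eq_zero]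
    exact Finset.sum_congr rfl fun k _ => graphPotential_relation hfc (hg k) (hgs k)
      (hc11 k 1) (hc22 k 1) (fun y hy => momentum_Uc_snd hμ.ne' k hy) hx
  · rw [hv1 0 x hx, hv2 1 x hx, ← Finset.sum_add_distrib]
    refine Finset.sum_eq_zero fun k _ => ?_
    have h := graphPotential_relation hfc (hg k) (hgs k) (C := fun _ => 0) (c := 1)
      (contDiffOn_pd1 (hU k 0)).continuousOn (contDiffOn_pd2 (hU k 1)).continuousOn
      (fun y hy => by rw [one_mul, div_Uc μ k hy]) hx
    simpa [graphPotential] using h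
end
end

section
/- Let μ > 0, let f ∈ C¹(ℝ), set Ω := {(x₁,x₂) ∈ ℝ² : x₂ < f(x₁)}, let β = (β₁, β₂) ∈ C¹(ℝ, ℝ²) have compact support, and let v(x) := ∑_{k=1}^{2} ∫_ℝ ∂_s(𝒰^k(x − (s, f(s)))) β_k(s) ds and p(x) := −∑_{k=1}^{2} ∫_ℝ 𝒫^k(x − (s, f(s))) β_k'(s) ds for x ∈ Ω. Then (v, p) vanishes at infinity: for every ε > 0 there exists R > 0 such that |v(x)| + |p(x)| ≤ ε for all x ∈ Ω with |x| ≥ R. -/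
/-! The kernels decay like the inverse distance: `|∇𝒰^k_j(y)| ≤ C/|y|` and `|𝒫^k(y)| ≤ C/|y|`
(`abs_fderiv_Uc_le`, `abs_Pk_le`).  The densities `β_k`, `β_k'` are continuous and vanish off a
compact set `K ⊆ ℝ`, over which the graph of `f` stays within some distance `M` of the origin.  So
for `|x| ≥ M + r` and `s ∈ K` the kernels at `x - (s, f s)` are at most `C/r`, and integrating
against the densities gives `|v(x)| + |p(x)| ≤ A/r` with `A` independent of `x`
(`abs_integral_le_of_decay`); `r` is then taken large. -/

noncomputable section

open Real MeasureTheory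

/-- The Euclidean length on `ℝ × ℝ` (whose Mathlib norm is the sup norm). -/
def rho (y : ℝ × ℝ) : ℝ := Real.sqrt (y.1 ^ 2 + y.2 ^ 2)

lemma rho_eq (y : ℝ × ℝ) : rho y = ‖(⟨y.1, y.2⟩ : ℂ)‖ := by
  rw [Complex.norm_eq_sqrt_sq_add_sq]; rfl

lemma rho_le_add (x z : ℝ × ℝ) : rho x ≤ rho (x - z) + rho z := by
  simp only [rho_eq]
  refine le_trans (le_of_eq ?_) (norm_add_le _ _)
  congr 1
  apply Complex.ext <;> simp

lemma rho_sq (y : ℝ × ℝ) : rho y ^ 2 = y.1 ^ 2 + y.2 ^ 2 :=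
  Real.sq_sqrt (by positivity)

lemma abs_coord_le (j : Fin 2) (y : ℝ × ℝ) : |coord j y| ≤ rho y := by
  unfold coord
  split_ifs
  · exact Real.abs_le_sqrt (by nlinarith [sq_nonneg y.2])
  · exact Real.abs_le_sqrt (by nlinarith [sq_nonneg y.1])

lemma abs_Pk_le (k : Fin 2) (y : ℝ × ℝ) (hy : 0 < rho y) :
    |Pk k y| ≤ (1 / (2 * π)) / rho y := by
  have h := abs_coord_le k y
  have hπ := Real.pi_pos
  unfold Pk
  rw [← rho_sq, abs_div, abs_mul, abs_neg, abs_of_pos (by positivity : (0:ℝ) < 1 / (2 * π)),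
    abs_of_pos (by positivity : (0:ℝ) < rho y ^ 2), div_le_div_iff₀ (by positivity) hy]
  have : |coord k y| * rho y ≤ rho y ^ 2 := by nlinarith
  calc _ = 1 / (2 * π) * (|coord k y| * rho y) := by ring
    _ ≤ _ := by gcongr

/-- `coord j` as a continuous linear map. -/
def coordL (j : Fin 2) : ℝ × ℝ →L[ℝ] ℝ :=
  if j = 0 then ContinuousLinearMap.fst ℝ ℝ ℝ else ContinuousLinearMap.snd ℝ ℝ ℝ

lemma coordL_apply (j : Fin 2) (y : ℝ × ℝ) : coordL j y = coord j y := by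
  unfold coordL coord; split_ifs <;> rfl

lemma fderiv_Uc (μ : ℝ) (k j : Fin 2) (y w : ℝ × ℝ) (hy : 0 < rho y) :
    fderiv ℝ (Uc μ k j) y w = -(1 / (4 * π * μ)) *
      ((if j = k then (1 : ℝ) else 0) * (-((y.1 * w.1 + y.2 * w.2) / rho y ^ 2))
        + (coord j w * coord k y + coord j y * coord k w) / rho y ^ 2
        - coord j y * coord k y * (2 * (y.1 * w.1 + y.2 * w.2)) / (rho y ^ 2) ^ 2) := by
  have hq : y.1 ^ 2 + y.2 ^ 2 ≠ 0 := by rw [← rho_sq]; positivity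
  have e : Uc μ k j = fun y => -(1 / (4 * π * μ)) *
      ((if j = k then (1 : ℝ) else 0) * (-(1/2) * Real.log (y.1 ^ 2 + y.2 ^ 2))
      + coordL j y * coordL k y * (y.1 ^ 2 + y.2 ^ 2)⁻¹) := by
    funext y
    simp only [Uc, coordL_apply]
    rw [one_div (Real.sqrt _), Real.log_inv, Real.log_sqrt (by positivity)]
    ring
  have d1 : HasFDerivAt (fun y : ℝ × ℝ => y.1) (ContinuousLinearMap.fst ℝ ℝ ℝ) y :=
    hasFDerivAt_fst
  have d2 : HasFDerivAt (fun y : ℝ × ℝ => y.2) (ContinuousLinearMap.snd ℝ ℝ ℝ) y :=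
    hasFDerivAt_snd
  have dq := (d1.pow 2).add (d2.pow 2)
  have dl := dq.log hq
  have di := (hasDerivAt_inv hq).comp_hasFDerivAt y dq
  have dc := ((coordL j).hasFDerivAt (x := y)).mul ((coordL k).hasFDerivAt (x := y))
  have D := (((dl.const_mul (-(1/2))).const_mul (if j = k then (1 : ℝ) else 0)).add
    (dc.mul di)).const_mul (-(1 / (4 * π * μ)))
  rw [e]
  refine (congrArg (fun l => l w) D.fderiv).trans ?_
  clear D e
  generalize (if j = k then (1 : ℝ) else 0) = δ
  generalize 1 / (4 * π * μ) = c
  simp [coordL_apply, rho_sq]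
  field_simp
  ring

lemma abs_fderiv_Uc_le {μ : ℝ} (hμ : 0 < μ) (k j : Fin 2) (y w : ℝ × ℝ) (hy : 0 < rho y)
    (hw : rho w ≤ 1) :
    |fderiv ℝ (Uc μ k j) y w| ≤ (8 / (4 * π * μ)) / rho y := by
  rw [fderiv_Uc μ k j y w hy]
  have hπ := Real.pi_pos
  have bj := abs_coord_le j y
  have bk := abs_coord_le k y
  have wj := (abs_coord_le j w).trans hw
  have wk := (abs_coord_le k w).trans hw
  have y1 : |y.1| ≤ rho y := abs_coord_le 0 y
  have y2 : |y.2| ≤ rho y := abs_coord_le 1 y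
  have w1 : |w.1| ≤ 1 := (abs_coord_le 0 w).trans hw
  have w2 : |w.2| ≤ 1 := (abs_coord_le 1 w).trans hw
  have hd : |if j = k then (1 : ℝ) else 0| ≤ 1 := by split_ifs <;> simp
  generalize (if j = k then (1 : ℝ) else 0) = δ at *
  generalize rho y = r at *
  have hdot : |y.1 * w.1 + y.2 * w.2| ≤ 2 * r := by
    refine (abs_add_le _ _).trans ?_
    rw [abs_mul, abs_mul]
    have := mul_le_mul y1 w1 (abs_nonneg _) hy.le
    have := mul_le_mul y2 w2 (abs_nonneg _) hy.le
    linarith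
  generalize y.1 * w.1 + y.2 * w.2 = d at *
  have t1 : |δ * (-(d / r ^ 2))| ≤ 2 / r := by
    rw [abs_mul, abs_neg, abs_div, abs_of_pos (by positivity : 0 < r ^ 2)]
    calc |δ| * (|d| / r ^ 2) ≤ 1 * (2 * r / r ^ 2) := by gcongr
      _ = 2 / r := by field_simp
  have t2 : |(coord j w * coord k y + coord j y * coord k w) / r ^ 2| ≤ 2 / r := by
    rw [abs_div, abs_of_pos (by positivity : 0 < r ^ 2)]
    have : |coord j w * coord k y + coord j y * coord k w| ≤ 1 * r + r * 1 := by
      refine (abs_add_le _ _).trans ?_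
      rw [abs_mul, abs_mul]
      gcongr
    calc _ ≤ (1 * r + r * 1) / r ^ 2 := by gcongr
      _ = 2 / r := by field_simp; ring
  have t3 : |coord j y * coord k y * (2 * d) / (r ^ 2) ^ 2| ≤ 4 / r := by
    rw [abs_div, abs_of_pos (by positivity : 0 < (r ^ 2) ^ 2), abs_mul, abs_mul, abs_mul,
      abs_two]
    calc _ ≤ r * r * (2 * (2 * r)) / (r ^ 2) ^ 2 := by gcongr
      _ = 4 / r := by field_simp; ring
  rw [abs_mul, abs_neg, abs_of_pos (by positivity : 0 < 1 / (4 * π * μ))]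
  have key : ∀ a b c : ℝ, |a| ≤ 2 / r → |b| ≤ 2 / r → |c| ≤ 4 / r → |a + b - c| ≤ 8 / r := by
    intro a b c ha hb hc
    have e : 8 / r = 2 / r + 2 / r + 4 / r := by ring
    rw [e]
    exact (abs_sub _ _).trans (add_le_add ((abs_add_le _ _).trans (add_le_add ha hb)) hc)
  calc _ ≤ 1 / (4 * π * μ) * (8 / r) := by gcongr; exact key _ _ _ t1 t2 t3
    _ = _ := by ring

/-- A kernel bounded by `h s / |x - (s, f s)|`, integrated against a compactly supported
density, is `O(1/r)` uniformly over the points `x` with `|x| ≥ M + r`. -/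
lemma abs_integral_le_of_decay (f : ℝ → ℝ) (hf : Continuous f) (G : ℝ × ℝ → ℝ → ℝ)
    (h b : ℝ → ℝ) (hh : Continuous h) (hb : Continuous b) (hbs : HasCompactSupport b)
    (hG : ∀ x s, 0 < rho (x - (s, f s)) → |G x s| ≤ h s / rho (x - (s, f s))) :
    ∃ A M : ℝ, 0 ≤ A ∧ 0 ≤ M ∧ ∀ (x : ℝ × ℝ) (r : ℝ), 0 < r → M + r ≤ rho x →
      |∫ s, G x s * b s| ≤ A / r := by
  have hc : Continuous fun s => rho (s, f s) := by unfold rho; fun_prop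
  obtain ⟨M, hM⟩ := hbs.isCompact.exists_bound_of_continuousOn hc.continuousOn
  refine ⟨∫ s, |h s * b s|, max M 0, integral_nonneg fun s => abs_nonneg _, le_max_right _ _,
    fun x r hr hx => ?_⟩
  have hi : Integrable fun s => |h s * b s| :=
    ((hh.mul hb).integrable_of_hasCompactSupport hbs.mul_left).abs
  have := norm_integral_le_of_norm_le (hi.div_const r) (f := fun s => G x s * b s)
    (Filter.Eventually.of_forall fun s => ?_)
  · rwa [integral_div, Real.norm_eq_abs] at this
  · by_cases hs : b s = 0
    · simp [hs]
    have h1 := hM s (subset_tsupport _ hs)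
    have h2 : r ≤ rho (x - (s, f s)) := by
      have := rho_le_add x (s, f s)
      have := (le_abs_self _).trans h1
      have := le_max_left M 0
      linarith
    have h3 := hG x s (hr.trans_le h2)
    have h4 : |G x s| ≤ |h s| / r :=
      h3.trans (div_le_div₀ (abs_nonneg _) (le_abs_self _) hr h2)
    rw [Real.norm_eq_abs, abs_mul, abs_mul, mul_div_right_comm]
    gcongr

lemma abs_vker_le {μ : ℝ} (hμ : 0 < μ) (f : ℝ → ℝ) (k j : Fin 2) (x : ℝ × ℝ) (s : ℝ)
    (hr : 0 < rho (x - (s, f s))) :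
    |vker μ f k j x s| ≤ ((8 / (4 * π * μ)) * (1 + |deriv f s|)) / rho (x - (s, f s)) := by
  have e1 := abs_fderiv_Uc_le hμ k j _ (1, 0) hr (by simp [rho])
  have e2 := abs_fderiv_Uc_le hμ k j _ (0, 1) hr (by simp [rho])
  unfold vker pd1 pd2
  rw [abs_neg]
  refine (abs_add_le _ _).trans ?_
  rw [abs_mul]
  calc _ ≤ (8 / (4 * π * μ)) / rho (x - (s, f s))
        + |deriv f s| * ((8 / (4 * π * μ)) / rho (x - (s, f s))) := by gcongr
    _ = _ := by ring

/-- Let `μ > 0`, `f ∈ C¹(ℝ)`, `Ω = {x : x₂ < f(x₁)}`, and let `β = (β₁,β₂) ∈ C¹(ℝ,ℝ²)`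
have compact support.  Then the single layer potentials `(v,p)` vanish at infinity:
for every `ε > 0` there is `R > 0` with `|v(x)| + |p(x)| ≤ ε` for all `x ∈ Ω` with
`|x| ≥ R`, where `|x| = (x₁² + x₂²)^{1/2}` and `|v(x)| = (v₁(x)² + v₂(x)²)^{1/2}`. -/
theorem single_layer_velocity_pressure_vanishes_at_infinity
    (μ : ℝ) (hμ : 0 < μ)
    (f : ℝ → ℝ) (hf : ContDiff ℝ 1 f)
    (β : Fin 2 → ℝ → ℝ) (hβ : ∀ k, ContDiff ℝ 1 (β k))
    (hβs : ∀ k, HasCompactSupport (β k)) :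
    ∀ ε > (0 : ℝ), ∃ R > (0 : ℝ), ∀ x : ℝ × ℝ, x.2 < f x.1 →
      R ≤ Real.sqrt (x.1 ^ 2 + x.2 ^ 2) →
      Real.sqrt ((vsl μ f β 0 x) ^ 2 + (vsl μ f β 1 x) ^ 2) + |psl f β x| ≤ ε := by
  have hf' : Continuous (deriv f) := hf.continuous_deriv le_rfl
  have hv : ∀ j k : Fin 2, ∃ A M : ℝ, 0 ≤ A ∧ 0 ≤ M ∧ ∀ (x : ℝ × ℝ) (r : ℝ), 0 < r →
      M + r ≤ rho x → |∫ s, vker μ f k j x s * β k s| ≤ A / r := fun j k =>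
    abs_integral_le_of_decay f hf.continuous (vker μ f k j)
      (fun s => (8 / (4 * π * μ)) * (1 + |deriv f s|)) (β k) (by fun_prop)
      (hβ k).continuous (hβs k) (fun x s hr => abs_vker_le hμ f k j x s hr)
  have hp : ∀ k : Fin 2, ∃ A M : ℝ, 0 ≤ A ∧ 0 ≤ M ∧ ∀ (x : ℝ × ℝ) (r : ℝ), 0 < r →
      M + r ≤ rho x → |∫ s, Pk k (x - (s, f s)) * deriv (β k) s| ≤ A / r := fun k =>
    abs_integral_le_of_decay f hf.continuous (fun x s => Pk k (x - (s, f s)))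
      (fun _ => 1 / (2 * π)) (deriv (β k)) (by fun_prop)
      ((hβ k).continuous_deriv le_rfl) (hβs k).deriv (fun x s hr => abs_Pk_le k _ hr)
  choose A M hA hM hAM using hv
  choose B N hB hN hBN using hp
  intro ε hε
  -- `T / r` bounds the sum of all six integrals, and `L` dominates all the thresholds.
  set T := A 0 0 + A 0 1 + A 1 0 + A 1 1 + B 0 + B 1 with hT
  set L := M 0 0 + M 0 1 + M 1 0 + M 1 1 + N 0 + N 1 with hL
  have hT0 : 0 ≤ T := by
    linarith [hA 0 0, hA 0 1, hA 1 0, hA 1 1, hB 0, hB 1]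
  have hL0 : 0 ≤ L := by
    linarith [hM 0 0, hM 0 1, hM 1 0, hM 1 1, hN 0, hN 1]
  have hr : 0 < T / ε + 1 := by positivity
  refine ⟨L + (T / ε + 1), by positivity, fun x _ hx => ?_⟩
  change _ ≤ rho x at hx
  have m00 := hM 0 0
  have m01 := hM 0 1
  have m10 := hM 1 0
  have m11 := hM 1 1
  have n0 := hN 0
  have n1 := hN 1
  have a00 := hAM 0 0 x _ hr (by linarith)
  have a01 := hAM 0 1 x _ hr (by linarith)
  have a10 := hAM 1 0 x _ hr (by linarith)
  have a11 := hAM 1 1 x _ hr (by linarith)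
  have b0 := hBN 0 x _ hr (by linarith)
  have b1 := hBN 1 x _ hr (by linarith)
  have hTε : T / (T / ε + 1) ≤ ε := by
    rw [div_le_iff₀ hr, mul_add, mul_div_cancel₀ _ hε.ne']
    linarith
  have v0 : |vsl μ f β 0 x| ≤ A 0 0 / (T / ε + 1) + A 0 1 / (T / ε + 1) := by
    unfold vsl
    rw [Fin.sum_univ_two]
    exact (abs_add_le _ _).trans (add_le_add a00 a01)
  have v1 : |vsl μ f β 1 x| ≤ A 1 0 / (T / ε + 1) + A 1 1 / (T / ε + 1) := by
    unfold vsl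
    rw [Fin.sum_univ_two]
    exact (abs_add_le _ _).trans (add_le_add a10 a11)
  have p0 : |psl f β x| ≤ B 0 / (T / ε + 1) + B 1 / (T / ε + 1) := by
    unfold psl
    rw [Fin.sum_univ_two, abs_neg]
    exact (abs_add_le _ _).trans (add_le_add b0 b1)
  have hs : Real.sqrt ((vsl μ f β 0 x) ^ 2 + (vsl μ f β 1 x) ^ 2)
      ≤ |vsl μ f β 0 x| + |vsl μ f β 1 x| := by
    rw [Real.sqrt_le_left (by positivity), ← sq_abs (vsl μ f β 0 x), ← sq_abs (vsl μ f β 1 x)]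
    nlinarith [mul_nonneg (abs_nonneg (vsl μ f β 0 x)) (abs_nonneg (vsl μ f β 1 x))]
  have hsum : T / (T / ε + 1) = A 0 0 / (T / ε + 1) + A 0 1 / (T / ε + 1)
      + (A 1 0 / (T / ε + 1) + A 1 1 / (T / ε + 1))
      + (B 0 / (T / ε + 1) + B 1 / (T / ε + 1)) := by
    generalize T / ε + 1 = r
    rw [hT]; ring
  linarith
end
end
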